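/- Let H₀ ∈ (0,1), K₀ ∈ (0,1], and set H = H₀K₀. Let R(t,s) = 2^{−K₀} ( (t^{2H₀} + s^{2H₀})^{K₀} − |t−s|^{2H₀K₀} ) for t,s ≥ 0 be the covariance function of one-dimensional bi-fractional Brownian motion B^{H₀,K₀}. Then there exists a constant κ_{H₀,K₀} > 0 such that for every integer m ≥ 1 and all times 0 < s₁,…,s_m, t < ∞: inf_{a∈ℝ^m} [ R(t,t) − 2 Σ_{j=1}^m a_j R(t,s_j) + Σ_{i=1}^m Σ_{j=1}^m a_i a_j R(s_i,s_j) ] ≥ κ_{H₀,K₀} · min{|t−s₁|^{2H},…,|t−s_m|^{2H}, t^{2H}}. Equivalently, for a centered Gaussian process B^{H₀,K₀} with covariance R, Var(B^{H₀,K₀}_t | B^{H₀,K₀}_{s₁},…,B^{H₀,K₀}_{s_m}) ≥ κ_{H₀,K₀} min{|t−s₁|^{2H},…,|t−s_m|^{2H}, t^{2H}}, i.e. bi-fractional Brownian motion satisfies strong local nondeterminism with index H = H₀K₀. -/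

import Mathlib

open Real
open scoped Topology

noncomputable section

/-- The covariance kernel of bi-fractional Brownian motion with parameters `H₀, K₀`. -/
def Rbifbm (H₀ K₀ t s : ℝ) : ℝ :=
  2 ^ (-K₀) * ((t ^ (2 * H₀) + s ^ (2 * H₀)) ^ K₀ - |t - s| ^ (2 * H₀ * K₀))

open MeasureTheory Set

theorem integrableOn_mul_rpow_of_le {f : ℝ → ℝ} {C β p : ℝ} (hm : Measurable f)
    (h0 : ∀ u, 0 ≤ u → 0 ≤ f u) (h1 : ∀ u, 0 ≤ u → f u ≤ 1)
    (hC : ∀ u, 0 ≤ u → f u ≤ C * u ^ β) (hp : 0 < p) (hpβ : p < β) :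
    IntegrableOn (fun u => f u * u ^ (-1 - p)) (Ioi 0) := by
  have hmeas : Measurable fun u : ℝ => f u * u ^ (-1 - p) := by fun_prop
  rw [← Ioc_union_Ioi_eq_Ioi (zero_le_one' ℝ)]
  refine IntegrableOn.union ?_ ?_
  · have hi : IntegrableOn (fun u : ℝ => C * u ^ (β - 1 - p)) (Ioc 0 1) := by
      refine Integrable.const_mul ?_ C
      have := intervalIntegral.intervalIntegrable_rpow' (a := 0) (b := 1)
        (show -1 < β - 1 - p by linarith)
      rwa [intervalIntegrable_iff_integrableOn_Ioc_of_le zero_le_one] at this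
    refine Integrable.mono' hi hmeas.aestronglyMeasurable ?_
    filter_upwards [ae_restrict_mem measurableSet_Ioc] with u hu
    have hu0 : 0 ≤ u := hu.1.le
    rw [Real.norm_of_nonneg (mul_nonneg (h0 u hu0) (rpow_nonneg hu0 _)),
      show β - 1 - p = β + (-1 - p) by ring, rpow_add hu.1, ← mul_assoc]
    exact mul_le_mul_of_nonneg_right (hC u hu0) (rpow_nonneg hu0 _)
  · refine Integrable.mono' (integrableOn_Ioi_rpow_of_lt (a := -1 - p) (by linarith) one_pos)
      hmeas.aestronglyMeasurable ?_
    filter_upwards [ae_restrict_mem measurableSet_Ioi] with u hu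
    have hu0 : (0 : ℝ) ≤ u := zero_le_one.trans (le_of_lt hu)
    rw [Real.norm_of_nonneg (mul_nonneg (h0 u hu0) (rpow_nonneg hu0 _))]
    exact mul_le_of_le_one_left (rpow_nonneg hu0 _) (h1 u hu0)

theorem integral_comp_mul_mul_rpow {f : ℝ → ℝ} {p x : ℝ} (hf : f 0 = 0) (hp : 0 < p)
    (hx : 0 ≤ x) :
    ∫ u in Ioi (0 : ℝ), f (u * x) * u ^ (-1 - p) =
      x ^ p * ∫ u in Ioi (0 : ℝ), f u * u ^ (-1 - p) := by
  rcases hx.eq_or_lt with rfl | hx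
  · simp [hf, zero_rpow hp.ne']
  have h := integral_comp_mul_right_Ioi (fun u => f u * u ^ (-1 - p)) 0 hx
  rw [zero_mul, smul_eq_mul] at h
  have h2 : ∫ u in Ioi (0 : ℝ), f (u * x) * u ^ (-1 - p) =
      x ^ (1 + p) * ∫ u in Ioi (0 : ℝ), f (u * x) * (u * x) ^ (-1 - p) := by
    rw [← integral_const_mul]
    refine setIntegral_congr_fun measurableSet_Ioi fun u hu => ?_
    have hu : 0 < u := hu
    simp only [mul_rpow hu.le hx.le]
    have : x ^ (1 + p) * x ^ (-1 - p) = 1 := by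
      rw [← rpow_add hx]; simp
    linear_combination (-f (u * x) * u ^ (-1 - p)) * this
  rw [h2, h, rpow_add hx, rpow_one]
  field_simp

theorem integral_mul_rpow_pos {f : ℝ → ℝ} {p : ℝ}
    (hi : IntegrableOn (fun u => f u * u ^ (-1 - p)) (Ioi 0))
    (h0 : ∀ u, 0 ≤ u → 0 ≤ f u) (hpos : ∀ u, 1 ≤ u → 0 < f u) :
    0 < ∫ u in Ioi (0 : ℝ), f u * u ^ (-1 - p) := by
  rw [setIntegral_pos_iff_support_of_nonneg_ae _ hi]
  · refine lt_of_lt_of_le ?_ (measure_mono (s := Ioi (1 : ℝ)) fun u hu => ?_)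
    · simp
    · have hu : 1 < u := hu
      exact ⟨(mul_pos (hpos u hu.le) (rpow_pos_of_pos (by linarith) _)).ne',
        lt_trans one_pos hu⟩
  · filter_upwards [ae_restrict_mem measurableSet_Ioi] with u hu
    exact mul_nonneg (h0 u (le_of_lt hu)) (rpow_nonneg (le_of_lt hu) _)

/-- A real function is positive definite if all its translation kernels are positive
semidefinite. -/
def IsPosDefFun (ψ : ℝ → ℝ) : Prop :=
  ∀ (ι : Type) [Fintype ι] (τ c : ι → ℝ), 0 ≤ ∑ i, ∑ j, c i * c j * ψ (τ i - τ j)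

/-- The tent function supported on `[-1/2, 1/2]`. -/
def tent (y : ℝ) : ℝ := max 0 (1 - 2 * |y|)

theorem tent_nonneg (y : ℝ) : 0 ≤ tent y := le_max_left _ _

theorem continuous_tent : Continuous tent := by unfold tent; fun_prop

theorem tent_of_le {y : ℝ} (hy : 1 / 2 ≤ |y|) : tent y = 0 :=
  max_eq_left (by linarith)

theorem abs_tent_sub_le (x y : ℝ) : |tent x - tent y| ≤ 2 * |x - y| := by
  unfold tent
  refine (abs_max_sub_max_le_max _ _ _ _).trans (max_le (by simp) ?_)
  have h := abs_abs_sub_abs_le_abs_sub y x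
  rw [show 1 - 2 * |x| - (1 - 2 * |y|) = 2 * (|y| - |x|) by ring, abs_mul, abs_two,
    abs_sub_comm x y]
  linarith

theorem hasCompactSupport_tent : HasCompactSupport tent := by
  refine HasCompactSupport.intro (isCompact_Icc (a := (-1 : ℝ)) (b := 1)) fun y hy => tent_of_le ?_
  by_contra! h
  rw [abs_lt] at h
  exact hy ⟨by linarith, by linarith⟩

theorem integrable_tent_mul (a b : ℝ) : Integrable fun y => tent (y + a) * tent (y + b) := by
  refine Continuous.integrable_of_hasCompactSupport ?_ ?_
  · have := continuous_tent
    fun_prop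
  · exact (hasCompactSupport_tent.comp_homeomorph (Homeomorph.addRight a)).mul_right

/-- The autocorrelation of the tent function. -/
def tentCorr (x : ℝ) : ℝ := ∫ y, tent (y + x) * tent y

theorem integral_tent_mul (a b : ℝ) : ∫ y, tent (y + a) * tent (y + b) = tentCorr (a - b) := by
  rw [tentCorr, ← integral_add_right_eq_self (fun y => tent (y + (a - b)) * tent y) b]
  simp [add_assoc]

theorem tentCorr_neg (x : ℝ) : tentCorr (-x) = tentCorr x := by
  have h1 := integral_tent_mul 0 x
  have h2 := integral_tent_mul x 0
  rw [zero_sub] at h1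
  rw [sub_zero] at h2
  rw [← h1, ← h2]
  simp_rw [mul_comm]

theorem sum_sum_integral {ι X : Type*} [Fintype ι] [MeasurableSpace X] {μ : Measure X}
    {F : ι → ι → X → ℝ} (hF : ∀ i j, Integrable (F i j) μ) (c : ι → ℝ) :
    ∑ i, ∑ j, c i * c j * ∫ x, F i j x ∂μ = ∫ x, ∑ i, ∑ j, c i * c j * F i j x ∂μ := by
  rw [integral_finsetSum _ fun i _ => integrable_finsetSum _ fun j _ => (hF i j).const_mul _]
  refine Finset.sum_congr rfl fun i _ => ?_
  rw [integral_finsetSum _ fun j _ => (hF i j).const_mul _]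
  simp_rw [integral_const_mul]

theorem isPosDefFun_tentCorr : IsPosDefFun tentCorr := by
  intro ι _ τ c
  simp_rw [← integral_tent_mul]
  rw [sum_sum_integral fun i j => integrable_tent_mul _ _]
  refine integral_nonneg fun y => ?_
  have h : ∑ i, ∑ j, c i * c j * (tent (y + τ i) * tent (y + τ j)) =
      (∑ i, c i * tent (y + τ i)) ^ 2 := by
    rw [sq, Finset.sum_mul_sum]
    exact Finset.sum_congr rfl fun i _ => Finset.sum_congr rfl fun j _ => by ring
  exact (sq_nonneg _).trans_eq h.symm

theorem tentCorr_zero_pos : 0 < tentCorr 0 := by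
  have hc := continuous_tent
  refine Continuous.integral_pos_of_hasCompactSupport_nonneg_nonzero (x := 0) (by fun_prop)
    hasCompactSupport_tent.mul_left (fun _ => mul_nonneg (tent_nonneg _) (tent_nonneg _)) ?_
  simp [tent]

theorem tentCorr_nonneg (x : ℝ) : 0 ≤ tentCorr x :=
  integral_nonneg fun _ => mul_nonneg (tent_nonneg _) (tent_nonneg _)

theorem tentCorr_of_le {x : ℝ} (hx : 1 ≤ |x|) : tentCorr x = 0 := by
  refine integral_eq_zero_of_ae (Filter.Eventually.of_forall fun y => ?_)
  rcases le_total (1 / 2) |y| with hy | hy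
  · simp [tent_of_le hy]
  · have h := abs_sub (y + x) y
    rw [add_sub_cancel_left] at h
    simp [tent_of_le (show 1 / 2 ≤ |y + x| by linarith)]

theorem continuous_tentCorr : Continuous tentCorr := by
  have hc := continuous_tent
  refine continuous_iff_continuousAt.2 fun x => ?_
  refine continuousAt_of_dominated (bound := tent) ?_ ?_
    (hc.integrable_of_hasCompactSupport hasCompactSupport_tent) ?_
  · exact Filter.Eventually.of_forall fun x => Continuous.aestronglyMeasurable (by fun_prop)
  · refine Filter.Eventually.of_forall fun x => Filter.Eventually.of_forall fun y => ?_
    rw [Real.norm_of_nonneg (mul_nonneg (tent_nonneg _) (tent_nonneg _))]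
    refine mul_le_of_le_one_left (tent_nonneg _) (max_le zero_le_one ?_)
    linarith [abs_nonneg (y + x)]
  · exact Filter.Eventually.of_forall fun y => Continuous.continuousAt (by fun_prop)

theorem tentCorr_zero_sub (x : ℝ) :
    tentCorr 0 - tentCorr x = 1 / 2 * ∫ y, (tent (y + x) - tent y) ^ 2 := by
  have h1 := integral_tent_mul x x
  have h2 := integral_tent_mul 0 0
  have h3 := integral_tent_mul x 0
  have i1 := integrable_tent_mul x x
  have i2 := integrable_tent_mul 0 0
  have i3 := integrable_tent_mul x 0
  simp only [add_zero, sub_self, sub_zero] at *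
  have h : ∫ y, (tent (y + x) - tent y) ^ 2 =
      ∫ y, (tent (y + x) * tent (y + x) + tent y * tent y - 2 * (tent (y + x) * tent y)) :=
    integral_congr_ae (Filter.Eventually.of_forall fun y => by simp only; ring)
  have i12 : Integrable fun y => tent (y + x) * tent (y + x) + tent y * tent y := i1.add i2
  rw [h, integral_sub i12 (i3.const_mul 2), integral_add i1 i2, integral_const_mul, h1, h2, h3]
  ring

theorem tentCorr_le (x : ℝ) : tentCorr x ≤ tentCorr 0 := by
  have h := tentCorr_zero_sub x
  have : 0 ≤ ∫ y, (tent (y + x) - tent y) ^ 2 := integral_nonneg fun y => sq_nonneg _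
  linarith

theorem tentCorr_zero_sub_le (x : ℝ) : tentCorr 0 - tentCorr x ≤ (8 + tentCorr 0) * x ^ 2 := by
  have hV := tentCorr_zero_pos
  rcases le_total 1 |x| with hx | hx
  · have : 1 ≤ x ^ 2 := (one_le_sq_iff_one_le_abs x).2 hx
    rw [tentCorr_of_le hx]
    nlinarith
  · have hle : ∫ y, (tent (y + x) - tent y) ^ 2 ≤
        ∫ y, (Icc (-2 : ℝ) 2).indicator (fun _ => 4 * x ^ 2) y := by
      refine integral_mono_of_nonneg (Filter.Eventually.of_forall fun y => sq_nonneg _) ?_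
        (Filter.Eventually.of_forall fun y => ?_)
      · exact (integrable_indicator_iff measurableSet_Icc).2 (integrableOn_const (by simp))
      · by_cases hy : y ∈ Icc (-2 : ℝ) 2
        · simp only [indicator_of_mem hy]
          have h := abs_tent_sub_le (y + x) y
          rw [add_sub_cancel_left] at h
          rw [← sq_abs, ← sq_abs x]
          nlinarith [abs_nonneg (tent (y + x) - tent y)]
        · have hy2 : 2 ≤ |y| := by
            by_contra! h
            rw [abs_lt] at h
            exact hy ⟨h.1.le, h.2.le⟩
          have h := abs_sub (y + x) x
          rw [add_sub_cancel_right] at h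
          simp [indicator_of_notMem hy, tent_of_le (show 1 / 2 ≤ |y| by linarith),
            tent_of_le (show 1 / 2 ≤ |y + x| by linarith)]
    rw [integral_indicator measurableSet_Icc] at hle
    simp only [integral_const, smul_eq_mul, MeasurableSet.univ, measureReal_restrict_apply,
      univ_inter, Real.volume_real_Icc] at hle
    norm_num at hle
    rw [tentCorr_zero_sub]
    nlinarith [sq_nonneg x]

/-- A compactly supported positive definite function that is quadratic near `0`. -/
theorem exists_bump : ∃ χ : ℝ → ℝ, Measurable χ ∧ IsPosDefFun χ ∧ χ 0 = 1 ∧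
    (∀ x, χ (-x) = χ x) ∧ (∀ x, 0 ≤ χ x) ∧ (∀ x, χ x ≤ 1) ∧ (∀ x, 1 ≤ |x| → χ x = 0) ∧
    ∃ C, ∀ x, 1 - χ x ≤ C * x ^ 2 := by
  have hV := tentCorr_zero_pos
  refine ⟨fun x => tentCorr x / tentCorr 0, ?_, ?_, div_self hV.ne', ?_, ?_, ?_, ?_,
    (8 + tentCorr 0) / tentCorr 0, ?_⟩
  · exact (continuous_tentCorr.div_const _).measurable
  · intro ι _ τ c
    have h := div_nonneg (isPosDefFun_tentCorr ι τ c) hV.le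
    simpa only [Finset.sum_div, mul_div_assoc] using h
  · intro x
    simp only [tentCorr_neg]
  · exact fun x => div_nonneg (tentCorr_nonneg x) hV.le
  · exact fun x => div_le_one_of_le₀ (tentCorr_le x) hV.le
  · intro x hx
    simp [tentCorr_of_le hx]
  · intro x
    have h := div_le_div_of_nonneg_right (tentCorr_zero_sub_le x) hV.le
    rw [sub_div, div_self hV.ne'] at h
    calc _ ≤ _ := h
      _ = _ := by ring

/-- A real function is conditionally negative definite if its translation kernels are negative
semidefinite on vectors of zero sum. -/
def IsCondNegDefFun (N : ℝ → ℝ) : Prop :=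
  ∀ (ι : Type) [Fintype ι] (τ c : ι → ℝ), ∑ i, c i = 0 →
    ∑ i, ∑ j, c i * c j * N (τ i - τ j) ≤ 0

/-- For every scale `r`, a positive definite function supported in `[-r, r]` whose value at `0` is
comparable to `r ^ α` can be added to `|x| ^ α` without losing conditional negative definiteness.
It comes from the scale mixture `|x| ^ α = I⁻¹ * ∫ u, (1 - χ (u * x)) * u ^ (-1 - α)` of a compactly
supported positive definite `χ`. -/
theorem exists_localized {α : ℝ} (hα : 0 < α) (hα2 : α < 2) :
    ∃ d, 0 < d ∧ ∀ r, 0 ≤ r → ∃ ψ : ℝ → ℝ, IsPosDefFun ψ ∧ ψ 0 = d * r ^ α ∧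
      (∀ x, ψ (-x) = ψ x) ∧ (∀ x, r ≤ |x| → ψ x = 0) ∧
      IsCondNegDefFun fun x => |x| ^ α + ψ x := by
  obtain ⟨χ, hm, hpd, hχ0, heven, hnn, hle, hsupp, C, hC⟩ := exists_bump
  have hC' : ∀ u, 0 ≤ u → 1 - χ u ≤ C * u ^ (2 : ℝ) := fun u _ => by
    rw [rpow_two]; exact hC u
  have habs : ∀ l x : ℝ, χ (l * |x|) = χ (l * x) := fun l x => by
    rcases abs_choice x with h | h <;> rw [h]
    rw [mul_neg, heven]
  set I := ∫ u in Ioi (0 : ℝ), (1 - χ u) * u ^ (-1 - α) with hI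
  have hIpos : 0 < I := by
    refine integral_mul_rpow_pos (integrableOn_mul_rpow_of_le (by fun_prop)
      (fun u _ => sub_nonneg.2 (hle u)) (fun u _ => by linarith [hnn u]) hC' hα hα2)
      (fun u _ => sub_nonneg.2 (hle u)) fun u hu => ?_
    rw [hsupp u (hu.trans (le_abs_self u))]
    norm_num
  let θ : ℝ → ℝ := fun u => if 1 ≤ u then 1 else 0
  have hθm : Measurable θ := Measurable.ite measurableSet_Ici measurable_const measurable_const
  have hθ0 : ∀ u, 0 ≤ θ u := fun u => by simp only [θ]; split_ifs <;> norm_num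
  have hθ1 : ∀ u, θ u ≤ 1 := fun u => by simp only [θ]; split_ifs <;> norm_num
  have hθsq : ∀ u, θ u ≤ u ^ 2 := fun u => by
    simp only [θ]; split_ifs with h
    · nlinarith
    · positivity
  have hint : ∀ r x : ℝ, IntegrableOn (fun u => θ (u * r) * χ (u * x) * u ^ (-1 - α)) (Ioi 0) :=
    fun r x => integrableOn_mul_rpow_of_le (C := r ^ 2) (β := 2) (by fun_prop)
      (fun u _ => mul_nonneg (hθ0 _) (hnn _))
      (fun u _ => mul_le_one₀ (hθ1 _) (hnn _) (hle _))
      (fun u _ => by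
        have h := mul_le_of_le_one_right (hθ0 (u * r)) (hle (u * x))
        have h2 := hθsq (u * r)
        rw [rpow_two]
        nlinarith) hα hα2
  have hint1 : ∀ x : ℝ, IntegrableOn (fun u => (1 - χ (u * x)) * u ^ (-1 - α)) (Ioi 0) :=
    fun x => integrableOn_mul_rpow_of_le (C := C * x ^ 2) (β := 2) (by fun_prop)
      (fun u _ => sub_nonneg.2 (hle _)) (fun u _ => by linarith [hnn (u * x)])
      (fun u _ => by
        have h := hC (u * x)
        rw [rpow_two]
        linarith) hα hα2
  refine ⟨(∫ u in Ioi (0 : ℝ), θ u * u ^ (-1 - α)) / I, div_pos ?_ hIpos, fun r hr =>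
    ⟨fun x => (∫ u in Ioi (0 : ℝ), θ (u * r) * χ (u * x) * u ^ (-1 - α)) / I, ?_, ?_, ?_, ?_, ?_⟩⟩
  · refine integral_mul_rpow_pos ?_ (fun u _ => hθ0 u) fun u hu => by simp [θ, hu]
    simpa [hχ0] using hint 1 0
  · intro ι _ τ c
    simp_rw [← mul_div_assoc, ← Finset.sum_div]
    refine div_nonneg ?_ hIpos.le
    rw [sum_sum_integral fun i j => hint r _]
    refine setIntegral_nonneg measurableSet_Ioi fun u hu => ?_
    have h := mul_nonneg (mul_nonneg (hθ0 (u * r)) (rpow_nonneg (le_of_lt hu) (-1 - α)))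
      (hpd ι (fun i => u * τ i) c)
    simp_rw [Finset.mul_sum] at h
    refine h.trans_eq (Finset.sum_congr rfl fun i _ => Finset.sum_congr rfl fun j _ => ?_)
    rw [mul_sub]
    ring
  · simp only [mul_zero, hχ0, mul_one]
    rw [integral_comp_mul_mul_rpow (by simp [θ]) hα hr]
    ring
  · intro x
    simp only [mul_neg, heven]
  · intro x hx
    beta_reduce
    rw [setIntegral_eq_zero_of_forall_eq_zero, zero_div]
    intro u hu
    have hu : 0 < u := hu
    by_cases h : 1 ≤ u * r
    · rw [hsupp (u * x), mul_zero, zero_mul]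
      rw [abs_mul, abs_of_pos hu]
      exact h.trans (mul_le_mul_of_nonneg_left hx hu.le)
    · simp [θ, h]
  · intro ι _ τ c hc
    have hpow : ∀ x : ℝ, |x| ^ α = (∫ u in Ioi (0 : ℝ), (1 - χ (u * x)) * u ^ (-1 - α)) / I := by
      intro x
      rw [eq_div_iff hIpos.ne', hI,
        ← integral_comp_mul_mul_rpow (f := fun u => 1 - χ u) (by simp [hχ0]) hα (abs_nonneg x)]
      simp only [habs]
    simp only [hpow]
    simp_rw [← add_div, ← integral_add (hint1 _) (hint r _), ← mul_div_assoc, ← Finset.sum_div]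
    refine div_nonpos_of_nonpos_of_nonneg ?_ hIpos.le
    rw [sum_sum_integral (F := fun i j u => (1 - χ (u * (τ i - τ j))) * u ^ (-1 - α) +
      θ (u * r) * χ (u * (τ i - τ j)) * u ^ (-1 - α)) fun i j => (hint1 _).add (hint r _)]
    refine setIntegral_nonpos measurableSet_Ioi fun u hu => ?_
    have h := mul_nonneg (mul_nonneg (sub_nonneg.2 (hθ1 (u * r)))
      (rpow_nonneg (le_of_lt hu) (-1 - α))) (hpd ι (fun i => u * τ i) c)
    have hcc : ∑ i, ∑ j, c i * c j * u ^ (-1 - α) = 0 := by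
      simp_rw [← Finset.sum_mul, ← Finset.mul_sum, hc]
      simp
    have hsum : ∑ i, ∑ j, c i * c j * ((1 - χ (u * (τ i - τ j))) * u ^ (-1 - α) +
        θ (u * r) * χ (u * (τ i - τ j)) * u ^ (-1 - α)) =
        ∑ i, ∑ j, c i * c j * u ^ (-1 - α) - (1 - θ (u * r)) * u ^ (-1 - α) *
          ∑ i, ∑ j, c i * c j * χ (u * τ i - u * τ j) := by
      simp_rw [Finset.mul_sum, ← Finset.sum_sub_distrib]
      refine Finset.sum_congr rfl fun i _ => Finset.sum_congr rfl fun j _ => ?_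
      rw [mul_sub]
      ring
    rw [hsum, hcc]
    linarith

theorem posSemidef_iff_sum_sum {ι : Type*} [Fintype ι] {M : Matrix ι ι ℝ} :
    M.PosSemidef ↔ (∀ i j, M j i = M i j) ∧ ∀ c : ι → ℝ, 0 ≤ ∑ i, ∑ j, c i * c j * M i j := by
  rw [Matrix.posSemidef_iff_dotProduct_mulVec]
  have h : ∀ c : ι → ℝ, star c ⬝ᵥ M.mulVec c = ∑ i, ∑ j, c i * c j * M i j := fun c => by
    simp only [dotProduct, Matrix.mulVec, Finset.mul_sum, star_trivial]
    exact Finset.sum_congr rfl fun i _ => Finset.sum_congr rfl fun j _ => by ring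
  simp_rw [h, Matrix.IsHermitian.ext_iff, star_trivial]

theorem Matrix.PosSemidef.pow_mul_entrywise {ι : Type*} [Fintype ι] {M E : Matrix ι ι ℝ}
    (hM : M.PosSemidef) (hE : E.PosSemidef) (n : ℕ) :
    (Matrix.of fun i j => M i j ^ n * E i j).PosSemidef := by
  induction n with
  | zero =>
    simp only [pow_zero, one_mul]
    exact hE
  | succ n ih =>
    have h : (Matrix.of fun i j => M i j ^ (n + 1) * E i j) =
        M.hadamard (Matrix.of fun i j => M i j ^ n * E i j) := by
      ext i j
      simp only [Matrix.hadamard_apply, Matrix.of_apply, pow_succ']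
      ring
    rw [h]
    exact hM.hadamard ih

theorem hasSum_exp_mul_sum_sum {ι : Type*} [Fintype ι] (M E : Matrix ι ι ℝ) (c : ι → ℝ) :
    HasSum (fun n : ℕ => (n.factorial : ℝ)⁻¹ * ∑ i, ∑ j, c i * c j * (M i j ^ n * E i j))
      (∑ i, ∑ j, c i * c j * (exp (M i j) * E i j)) := by
  simp_rw [Finset.mul_sum]
  refine hasSum_sum fun i _ => hasSum_sum fun j _ => ?_
  have h := (NormedSpace.expSeries_div_hasSum_exp (𝔸 := ℝ) (M i j)).mul_left (c i * c j * E i j)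
  rw [← Real.exp_eq_exp_ℝ] at h
  have e : (fun n : ℕ => (n.factorial : ℝ)⁻¹ * (c i * c j * (M i j ^ n * E i j))) =
      fun n : ℕ => c i * c j * (M i j ^ n / n.factorial * E i j) := by
    funext n
    rw [div_eq_mul_inv]
    ring
  rw [e]
  simpa only [mul_assoc (c i * c j), mul_comm (E i j)] using h

theorem Matrix.PosSemidef.sum_sum_mul_le_exp_mul {ι : Type*} [Fintype ι] {M E : Matrix ι ι ℝ}
    (hM : M.PosSemidef) (hE : E.PosSemidef) (c : ι → ℝ) :
    ∑ i, ∑ j, c i * c j * (M i j * E i j) ≤ ∑ i, ∑ j, c i * c j * (exp (M i j) * E i j) := by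
  have h := le_hasSum (hasSum_exp_mul_sum_sum M E c) 1 fun n _ =>
    mul_nonneg (by positivity) ((posSemidef_iff_sum_sum.1 (hM.pow_mul_entrywise hE n)).2 c)
  simpa using h

theorem Matrix.PosSemidef.exp_entrywise {ι : Type*} [Fintype ι] {M : Matrix ι ι ℝ}
    (hM : M.PosSemidef) : (Matrix.of fun i j => exp (M i j)).PosSemidef := by
  have hone : (Matrix.of fun _ _ : ι => (1 : ℝ)).PosSemidef := by
    refine posSemidef_iff_sum_sum.2 ⟨fun i j => rfl, fun c => ?_⟩
    simp_rw [Matrix.of_apply, mul_one, ← Finset.sum_mul_sum]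
    exact mul_self_nonneg _
  refine posSemidef_iff_sum_sum.2
    ⟨fun i j => congrArg exp ((posSemidef_iff_sum_sum.1 hM).1 i j), fun c => ?_⟩
  have h := (hasSum_exp_mul_sum_sum M (Matrix.of fun _ _ => 1) c).nonneg fun n =>
    mul_nonneg (by positivity) ((posSemidef_iff_sum_sum.1 (hM.pow_mul_entrywise hone n)).2 c)
  simpa using h

theorem IsPosDefFun.posSemidef {ι : Type} [Fintype ι] {ψ : ℝ → ℝ} (h : IsPosDefFun ψ)
    (heven : ∀ x, ψ (-x) = ψ x) (τ : ι → ℝ) :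
    (Matrix.of fun i j => ψ (τ i - τ j)).PosSemidef :=
  posSemidef_iff_sum_sum.2 ⟨fun i j => by
    simp only [Matrix.of_apply]
    rw [← heven, neg_sub], fun c => h ι τ c⟩

theorem sum_sum_option_elim {ι : Type*} [Fintype ι] (M : ι → ι → ℝ) (v w : ι → ℝ) (q z : ℝ)
    (c : ι → ℝ) :
    (∑ i : Option ι, ∑ j : Option ι, i.elim z c * j.elim z c *
      i.elim (j.elim q v) fun i => j.elim (w i) (M i)) =
      z * z * q + z * ∑ j, c j * v j + z * ∑ i, c i * w i + ∑ i, ∑ j, c i * c j * M i j := by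
  simp only [Fintype.sum_option, Option.elim_none, Option.elim_some, Finset.sum_add_distrib,
    Finset.mul_sum, ← add_assoc]
  simp only [mul_left_comm z, mul_assoc]
  ring

/-- Adjoining the point `0` with the weight that makes the total weight vanish. -/
theorem sum_sum_adjoin_zero {ι : Type*} [Fintype ι] {N : ℝ → ℝ} (heven : ∀ x, N (-x) = N x)
    (τ c : ι → ℝ) :
    (∑ i : Option ι, ∑ j : Option ι, i.elim (-∑ i, c i) c * j.elim (-∑ i, c i) c *
      N (i.elim 0 τ - j.elim 0 τ)) =
      -∑ i, ∑ j, c i * c j * (N (τ i) + N (τ j) - N (τ i - τ j) - N 0) := by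
  have h := sum_sum_option_elim (fun i j => N (τ i - τ j)) (fun i => N (τ i))
    (fun i => N (τ i)) (N 0) (-∑ i, c i) c
  have e1 : (∑ i, c i) * ∑ i, c i * N (τ i) = ∑ i, ∑ j, c i * c j * N (τ j) := by
    rw [Finset.sum_mul_sum]; simp_rw [mul_assoc]
  have e2 : (∑ i, c i) * ∑ i, c i * N (τ i) = ∑ i, ∑ j, c i * c j * N (τ i) := by
    rw [mul_comm, Finset.sum_mul_sum]; simp_rw [mul_right_comm]
  have e3 : (∑ i, c i) * (∑ i, c i) * N 0 = ∑ i, ∑ j, c i * c j * N 0 := by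
    simp_rw [Finset.sum_mul_sum, Finset.sum_mul]
  have hl : ∀ i j : Option ι, N (i.elim 0 τ - j.elim 0 τ) =
      i.elim (j.elim (N 0) fun i => N (τ i)) fun i => j.elim (N (τ i)) fun j => N (τ i - τ j) := by
    rintro (_ | i) (_ | j) <;> simp [heven]
  simp_rw [hl]
  rw [h]
  simp_rw [mul_sub, mul_add, Finset.sum_sub_distrib, Finset.sum_add_distrib]
  rw [← e1, ← e2, ← e3]
  ring

theorem IsCondNegDefFun.sum_sum_nonneg {ι : Type} [Fintype ι] {N : ℝ → ℝ}
    (h : IsCondNegDefFun N) (heven : ∀ x, N (-x) = N x) (τ c : ι → ℝ) :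
    0 ≤ ∑ i, ∑ j, c i * c j * (N (τ i) + N (τ j) - N (τ i - τ j) - N 0) := by
  have h' := h (Option ι) (fun o => o.elim 0 τ) (fun o => o.elim (-∑ i, c i) c)
    (by simp [Fintype.sum_option])
  rw [sum_sum_adjoin_zero heven] at h'
  linarith

/-- One direction of Schoenberg's theorem. -/
theorem IsCondNegDefFun.posSemidef_exp_neg {ι : Type} [Fintype ι] {N : ℝ → ℝ}
    (h : IsCondNegDefFun N) (heven : ∀ x, N (-x) = N x) (τ : ι → ℝ) :
    (Matrix.of fun i j => exp (-N (τ i - τ j))).PosSemidef := by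
  have hsymm : ∀ i j, N (τ j - τ i) = N (τ i - τ j) := fun i j => by rw [← heven, neg_sub]
  have hA : (Matrix.of fun i j => N (τ i) + N (τ j) - N (τ i - τ j) - N 0).PosSemidef :=
    posSemidef_iff_sum_sum.2 ⟨fun i j => by simp only [Matrix.of_apply, hsymm i j]; ring,
      h.sum_sum_nonneg heven τ⟩
  refine posSemidef_iff_sum_sum.2 ⟨fun i j => by simp only [Matrix.of_apply, hsymm i j],
    fun c => ?_⟩
  have h2 := mul_nonneg (exp_pos (N 0)).le
    ((posSemidef_iff_sum_sum.1 hA.exp_entrywise).2 fun i => c i * exp (-N (τ i)))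
  simp_rw [Finset.mul_sum] at h2
  refine h2.trans_eq (Finset.sum_congr rfl fun i _ => Finset.sum_congr rfl fun j _ => ?_)
  simp only [Matrix.of_apply]
  rw [show -N (τ i - τ j) = N 0 + -N (τ i) + -N (τ j) +
    (N (τ i) + N (τ j) - N (τ i - τ j) - N 0) by ring]
  simp only [exp_add]
  ring

theorem le_sum_sum_of_isolated {ι : Type*} [Fintype ι] {M : Matrix ι ι ℝ} (hM : M.PosSemidef)
    {i₀ : ι} (h0 : ∀ j, j ≠ i₀ → M i₀ j = 0) {c : ι → ℝ} (hc : c i₀ = 1) :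
    M i₀ i₀ ≤ ∑ i, ∑ j, c i * c j * M i j := by
  classical
  obtain ⟨hsymm, hnn⟩ := posSemidef_iff_sum_sum.1 hM
  have h := hnn (Function.update c i₀ 0)
  have e : ∑ i, ∑ j, c i * c j * M i j = M i₀ i₀ +
      ∑ i, ∑ j, Function.update c i₀ 0 i * Function.update c i₀ 0 j * M i j := by
    have e1 : M i₀ i₀ = ∑ i, ∑ j, if i = i₀ then if j = i₀ then M i j else 0 else 0 := by
      simp
    rw [e1]
    simp_rw [← Finset.sum_add_distrib]
    refine Finset.sum_congr rfl fun i _ => Finset.sum_congr rfl fun j _ => ?_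
    by_cases hi : i = i₀ <;> by_cases hj : j = i₀
    · subst hi; subst hj; simp [hc]
    · subst hi; simp [hj, h0 j hj]
    · subst hj; simp [hi, hsymm j i, h0 i hi]
    · simp [hi, hj]
  linarith

/-- Strong local nondeterminism of the kernel `exp (-l * |x| ^ α)`, with a constant that is
uniform in `l`. -/
theorem exists_le_sum_sum_exp {α : ℝ} (hα : 0 < α) (hα2 : α < 2) :
    ∃ d, 0 < d ∧ ∀ (ι : Type) [Fintype ι] (τ c : ι → ℝ) (i₀ : ι) (r l : ℝ), 0 ≤ r → 0 ≤ l →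
      c i₀ = 1 → (∀ j, j ≠ i₀ → r ≤ |τ i₀ - τ j|) →
      l * (d * r ^ α) * exp (-(l * (d * r ^ α))) ≤
        ∑ i, ∑ j, c i * c j * exp (-(l * |τ i - τ j| ^ α)) := by
  obtain ⟨d, hd, H⟩ := exists_localized hα hα2
  refine ⟨d, hd, fun ι _ τ c i₀ r l hr hl hc hsep => ?_⟩
  obtain ⟨ψ, hpd, hψ0, heven, hsupp, hcnd⟩ := H r hr
  have hM : (Matrix.of fun i j => l * ψ (τ i - τ j)).PosSemidef :=
    (hpd.posSemidef heven τ).smul hl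
  have hcnd' : IsCondNegDefFun fun x => l * (|x| ^ α + ψ x) := fun ι _ τ c h0 => by
    have h := mul_nonpos_of_nonneg_of_nonpos hl (hcnd ι τ c h0)
    simp_rw [Finset.mul_sum] at h
    refine le_of_eq_of_le (Finset.sum_congr rfl fun i _ => Finset.sum_congr rfl fun j _ => ?_) h
    ring
  have hE := hcnd'.posSemidef_exp_neg (by simp [heven]) τ
  have h1 := le_sum_sum_of_isolated (hM.hadamard hE) (i₀ := i₀) (fun j hj => by
    simp [hsupp _ (hsep j hj)]) hc
  have h2 := hM.sum_sum_mul_le_exp_mul hE c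
  simp only [Matrix.hadamard_apply, Matrix.of_apply, sub_self, abs_zero, zero_rpow hα.ne',
    zero_add, hψ0] at h1 h2
  refine (h1.trans h2).trans_eq
    (Finset.sum_congr rfl fun i _ => Finset.sum_congr rfl fun j _ => ?_)
  rw [← exp_add]
  ring_nf

/-- Strong local nondeterminism of fractional Brownian motion. -/
theorem exists_le_sum_sum_fbm {α : ℝ} (hα : 0 < α) (hα2 : α < 2) :
    ∃ d, 0 < d ∧ ∀ (ι : Type) [Fintype ι] (τ c : ι → ℝ) (i₀ : ι) (r : ℝ), 0 ≤ r →
      (∀ i, 0 ≤ τ i) → r ≤ τ i₀ → c i₀ = 1 → (∀ j, j ≠ i₀ → r ≤ |τ i₀ - τ j|) →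
      d * r ^ α ≤ ∑ i, ∑ j, c i * c j * (τ i ^ α + τ j ^ α - |τ i - τ j| ^ α) := by
  obtain ⟨d, hd, H⟩ := exists_localized hα hα2
  refine ⟨d, hd, fun ι _ τ c i₀ r hr hτ hrτ hc hsep => ?_⟩
  obtain ⟨ψ, hpd, hψ0, heven, hsupp, hcnd⟩ := H r hr
  have h1 := hcnd (Option ι) (fun o => o.elim 0 τ) (fun o => o.elim (-∑ i, c i) c)
    (by simp [Fintype.sum_option])
  have h2 := le_sum_sum_of_isolated (hpd.posSemidef heven fun o : Option ι => o.elim 0 τ)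
    (i₀ := some i₀) (c := fun o => o.elim (-∑ i, c i) c) (by
      rintro (_ | j) hj
      · simpa using hsupp _ (by simpa using hrτ.trans (le_abs_self _))
      · exact hsupp _ (hsep j fun h => hj (congrArg some h))) hc
  have h3 := sum_sum_adjoin_zero (N := fun x => |x| ^ α) (by simp) τ c
  simp only [Matrix.of_apply, sub_self, hψ0, abs_zero, zero_rpow hα.ne', sub_zero,
    abs_of_nonneg (hτ _), mul_add (_ * _) (|_| ^ α), Finset.sum_add_distrib] at h1 h2 h3
  linarith

/-- Strong local nondeterminism of bi-fractional Brownian motion, for weights normalised to `1` at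
an isolated time. -/
theorem exists_le_sum_sum_bifbm {α K : ℝ} (hα : 0 < α) (hα2 : α < 2) (hK : 0 < K)
    (hK1 : K ≤ 1) :
    ∃ κ, 0 < κ ∧ ∀ (ι : Type) [Fintype ι] (τ c : ι → ℝ) (i₀ : ι) (r : ℝ), 0 ≤ r →
      (∀ i, 0 ≤ τ i) → r ≤ τ i₀ → c i₀ = 1 → (∀ j, j ≠ i₀ → r ≤ |τ i₀ - τ j|) →
      κ * r ^ (α * K) ≤
        ∑ i, ∑ j, c i * c j * ((τ i ^ α + τ j ^ α) ^ K - |τ i - τ j| ^ (α * K)) := by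
  rcases hK1.eq_or_lt with rfl | hK1
  · simpa using exists_le_sum_sum_fbm hα hα2
  obtain ⟨d, hd, H⟩ := exists_le_sum_sum_exp hα hα2
  have hexp1 : ∀ u : ℝ, 0 ≤ u → exp (-u) ≤ 1 := fun u hu => exp_le_one_iff.2 (by linarith)
  have hsub1 : ∀ u : ℝ, 1 - exp (-u) ≤ u := fun u => by linarith [add_one_le_exp (-u)]
  have hint1 : ∀ x : ℝ, 0 ≤ x →
      IntegrableOn (fun u => (1 - exp (-(u * x))) * u ^ (-1 - K)) (Ioi 0) := fun x hx =>
    integrableOn_mul_rpow_of_le (C := x) (β := 1) (by fun_prop)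
      (fun u hu => sub_nonneg.2 (hexp1 _ (mul_nonneg hu hx)))
      (fun u _ => by linarith [exp_pos (-(u * x))])
      (fun u _ => by rw [rpow_one, mul_comm x]; exact hsub1 _) hK hK1
  have hint2 : ∀ x : ℝ, 0 ≤ x →
      IntegrableOn (fun u => u * x * exp (-(u * x)) * u ^ (-1 - K)) (Ioi 0) := fun x hx =>
    integrableOn_mul_rpow_of_le (C := x) (β := 1) (by fun_prop)
      (fun u hu => by positivity)
      (fun u _ => by
        have h := add_one_le_exp (u * x)
        rw [exp_neg, ← div_eq_mul_inv, div_le_one (exp_pos _)]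
        linarith)
      (fun u hu => by
        rw [rpow_one, mul_comm x]
        exact mul_le_of_le_one_right (by positivity) (hexp1 _ (by positivity))) hK hK1
  set J := ∫ u in Ioi (0 : ℝ), (1 - exp (-u)) * u ^ (-1 - K) with hJ
  set L := ∫ u in Ioi (0 : ℝ), u * exp (-u) * u ^ (-1 - K) with hL
  have hJpos : 0 < J := integral_mul_rpow_pos (by simpa using hint1 1 zero_le_one)
    (fun u hu => sub_nonneg.2 (hexp1 _ hu))
    (fun u hu => sub_pos.2 (exp_lt_one_iff.2 (by linarith)))
  have hLpos : 0 < L := integral_mul_rpow_pos (f := fun u => u * exp (-u))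
    (by simpa using hint2 1 zero_le_one)
    (fun u hu => by positivity) (fun u hu => by positivity)
  have hpow : ∀ x : ℝ, 0 ≤ x →
      x ^ K = (∫ u in Ioi (0 : ℝ), (1 - exp (-(u * x))) * u ^ (-1 - K)) / J := fun x hx => by
    rw [eq_div_iff hJpos.ne', hJ,
      ← integral_comp_mul_mul_rpow (f := fun u => 1 - exp (-u)) (by simp) hK hx]
  refine ⟨d ^ K * L / J, by positivity, fun ι _ τ c i₀ r hr hτ hrτ hc hsep => ?_⟩
  have hτα : ∀ i, 0 ≤ τ i ^ α := fun i => rpow_nonneg (hτ i) α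
  have hF : ∀ i j, IntegrableOn (fun u => (1 - exp (-(u * (τ i ^ α + τ j ^ α)))) * u ^ (-1 - K) -
      (1 - exp (-(u * |τ i - τ j| ^ α))) * u ^ (-1 - K)) (Ioi 0) := fun i j =>
    (hint1 _ (add_nonneg (hτα i) (hτα j))).sub (hint1 _ (by positivity))
  have hR : ∑ i, ∑ j, c i * c j * ((τ i ^ α + τ j ^ α) ^ K - |τ i - τ j| ^ (α * K)) =
      (∫ u in Ioi (0 : ℝ), ∑ i, ∑ j, c i * c j *
        ((1 - exp (-(u * (τ i ^ α + τ j ^ α)))) * u ^ (-1 - K) -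
          (1 - exp (-(u * |τ i - τ j| ^ α))) * u ^ (-1 - K))) / J := by
    rw [← sum_sum_integral hF]
    simp_rw [Finset.sum_div, mul_div_assoc]
    refine Finset.sum_congr rfl fun i _ => Finset.sum_congr rfl fun j _ => ?_
    have hij : 0 ≤ |τ i - τ j| ^ α := by positivity
    rw [rpow_mul (abs_nonneg _), hpow _ (add_nonneg (hτα i) (hτα j)), hpow _ hij,
      integral_sub (hint1 _ (add_nonneg (hτα i) (hτα j))) (hint1 _ hij), sub_div]
  have hD : 0 ≤ d * r ^ α := by positivity
  have hlow : d ^ K * L * r ^ (α * K) =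
      ∫ u in Ioi (0 : ℝ), u * (d * r ^ α) * exp (-(u * (d * r ^ α))) * u ^ (-1 - K) := by
    rw [integral_comp_mul_mul_rpow (f := fun u => u * exp (-u)) (by simp) hK hD,
      mul_rpow hd.le (rpow_nonneg hr α), ← rpow_mul hr]
    ring
  rw [hR, div_mul_eq_mul_div, hlow]
  refine div_le_div_of_nonneg_right ?_ hJpos.le
  refine setIntegral_mono_on (hint2 _ hD) (integrable_finsetSum _ fun i _ =>
    integrable_finsetSum _ fun j _ => (hF i j).const_mul _) measurableSet_Ioi fun u hu => ?_
  have hu : 0 < u := hu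
  set z := ∑ i, c i * exp (-(u * τ i ^ α)) with hz
  have h := H (Option ι) (fun o => o.elim 0 τ) (fun o => o.elim (-z) c) (some i₀) r u hr hu.le hc
    (by
      rintro (_ | j) hj
      · simpa using hrτ.trans (le_abs_self _)
      · exact hsep j fun h => hj (congrArg some h))
  have hl : ∀ i j : Option ι, exp (-(u * |i.elim 0 τ - j.elim 0 τ| ^ α)) =
      i.elim (j.elim 1 fun i => exp (-(u * τ i ^ α))) fun i =>
        j.elim (exp (-(u * τ i ^ α))) fun j => exp (-(u * |τ i - τ j| ^ α)) := by
    rintro (_ | i) (_ | j) <;> simp [abs_of_nonneg (hτ _), zero_rpow hα.ne']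
  simp_rw [hl] at h
  rw [sum_sum_option_elim, ← hz] at h
  have h2 := mul_le_mul_of_nonneg_right h (rpow_nonneg hu.le (-1 - K))
  refine h2.trans_eq ?_
  have hzz : z * z = ∑ i, ∑ j, c i * c j * exp (-(u * (τ i ^ α + τ j ^ α))) := by
    rw [hz, Finset.sum_mul_sum]
    refine Finset.sum_congr rfl fun i _ => Finset.sum_congr rfl fun j _ => ?_
    rw [mul_add, neg_add, exp_add]
    ring
  have hring : -z * -z * 1 + -z * z + -z * z + ∑ i, ∑ j, c i * c j * exp (-(u * |τ i - τ j| ^ α)) =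
      ∑ i, ∑ j, c i * c j * exp (-(u * |τ i - τ j| ^ α)) -
        ∑ i, ∑ j, c i * c j * exp (-(u * (τ i ^ α + τ j ^ α))) := by
    rw [← hzz]
    ring
  rw [hring]
  simp_rw [← Finset.sum_sub_distrib, Finset.sum_mul]
  exact Finset.sum_congr rfl fun i _ => Finset.sum_congr rfl fun j _ => by ring

/-- Corollary 6.2. Bi-fractional Brownian motion satisfies strong local
nondeterminism with index `H = H₀K₀`: there is `κ > 0` such that for all `m ≥ 1`,
`0 < s₁,…,s_m, t` and all `a ∈ ℝ^m`, the prediction-error quadratic form of the kernel `R`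
is at least `κ · min{|t−s₁|^{2H},…,|t−s_m|^{2H}, t^{2H}}`. -/
theorem stmt_18 (H₀ K₀ : ℝ) (hH₀ : H₀ ∈ Set.Ioo (0 : ℝ) 1) (hK₀ : K₀ ∈ Set.Ioc (0 : ℝ) 1) :
    ∃ κ : ℝ, 0 < κ ∧ ∀ (m : ℕ) (s : Fin (m + 1) → ℝ) (t : ℝ),
      (∀ j, 0 < s j) → 0 < t → ∀ a : Fin (m + 1) → ℝ,
        κ * min
            (Finset.univ.inf' Finset.univ_nonempty fun j => |t - s j| ^ (2 * (H₀ * K₀)))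
            (t ^ (2 * (H₀ * K₀))) ≤
          Rbifbm H₀ K₀ t t - 2 * ∑ j, a j * Rbifbm H₀ K₀ t (s j) +
            ∑ i, ∑ j, a i * a j * Rbifbm H₀ K₀ (s i) (s j) := by
  obtain ⟨κ, hκ, H⟩ := exists_le_sum_sum_bifbm (α := 2 * H₀) (by linarith [hH₀.1])
    (by linarith [hH₀.2]) hK₀.1 hK₀.2
  have h2 : (0 : ℝ) < 2 ^ (-K₀) := by positivity
  refine ⟨2 ^ (-K₀) * κ, by positivity, fun m s t hs ht a => ?_⟩
  set r := min (Finset.univ.inf' Finset.univ_nonempty fun j => |t - s j|) t with hr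
  have hr0 : 0 ≤ r := le_min (Finset.le_inf' _ _ fun j _ => abs_nonneg _) ht.le
  have hmin : min (Finset.univ.inf' Finset.univ_nonempty fun j => |t - s j| ^ (2 * (H₀ * K₀)))
      (t ^ (2 * (H₀ * K₀))) ≤ r ^ (2 * H₀ * K₀) := by
    rw [← mul_assoc]
    rcases min_choice (Finset.univ.inf' Finset.univ_nonempty fun j => |t - s j|) t with h | h
    · obtain ⟨j, hj, hjr⟩ := Finset.exists_mem_eq_inf' Finset.univ_nonempty fun j => |t - s j|
      rw [hr, h, hjr]
      exact (min_le_left _ _).trans (Finset.inf'_le _ hj)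
    · rw [hr, h]
      exact min_le_right _ _
  have hmain := H (Option (Fin (m + 1))) (fun o => o.elim t s) (fun o => o.elim 1 fun j => -a j)
    none r hr0 (by rintro (_ | j); exacts [ht.le, (hs j).le]) (min_le_right _ _) rfl (by
      rintro (_ | j) hj
      · exact absurd rfl hj
      · exact (min_le_left _ _).trans (Finset.inf'_le _ (Finset.mem_univ j)))
  have h1 : (2 : ℝ) ^ (-K₀) * 2 ^ K₀ = 1 := by rw [← rpow_add two_pos]; simp
  have hl : ∀ i j : Option (Fin (m + 1)), ((i.elim t s) ^ (2 * H₀) + (j.elim t s) ^ (2 * H₀)) ^ K₀ -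
      |i.elim t s - j.elim t s| ^ (2 * H₀ * K₀) =
      2 ^ K₀ * i.elim (j.elim (Rbifbm H₀ K₀ t t) fun j => Rbifbm H₀ K₀ t (s j)) fun i =>
        j.elim (Rbifbm H₀ K₀ t (s i)) fun j => Rbifbm H₀ K₀ (s i) (s j) := by
    rintro (_ | i) (_ | j) <;> simp only [Option.elim_none, Option.elim_some, Rbifbm]
    all_goals rw [← mul_assoc, mul_comm (2 ^ K₀), h1, one_mul]
    rw [add_comm (t ^ _), abs_sub_comm]
  simp_rw [hl, mul_left_comm _ ((2 : ℝ) ^ K₀), ← Finset.mul_sum] at hmain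
  rw [sum_sum_option_elim] at hmain
  have h3 := mul_le_mul_of_nonneg_left hmain h2.le
  rw [← mul_assoc, ← mul_assoc, h1, one_mul] at h3
  refine (mul_le_mul_of_nonneg_left hmin (by positivity)).trans (h3.trans_eq ?_)
  simp only [neg_mul, mul_neg, neg_neg, Finset.sum_neg_distrib]
  ring
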